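/- arXiv:2210.00653 — 5 statements merged into one kernel-verified Lean document; each statement's English description precedes it below -/
import Mathlib

section
/- Suppose f satisfies the local tangential cone condition with constants η_1, …, η_m ∈ [0, 1/2). Let x⋆ ∈ ℝⁿ satisfy f(x⋆) = 0, let x ∈ ℝⁿ, and let i be an index with ∇f_i(x) ≠ 0. Then the nonlinear Kaczmarz update satisfies ‖T_i(x) − x⋆‖² ≤ ‖x − x⋆‖² − (1 − 2·η_i)·|f_i(x)|²/‖∇f_i(x)‖². -/
open scoped RealInnerProductSpace
open Finset

/-- one-step estimate for the nonlinear Kaczmarz update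
(Lemma on the local tangential cone condition). -/
theorem stmt0 {n m : ℕ} (hn : 0 < n) (hm : 0 < m)
    (f : Fin m → EuclideanSpace ℝ (Fin n) → ℝ)
    (g : Fin m → EuclideanSpace ℝ (Fin n) → EuclideanSpace ℝ (Fin n))
    (hgrad : ∀ i y, HasGradientAt (f i) (g i y) y)
    (η : Fin m → ℝ) (hη0 : ∀ i, 0 ≤ η i) (hη1 : ∀ i, η i < 1 / 2)
    (htcc : ∀ i x₁ x₂, |f i x₁ - f i x₂ - ⟪g i x₁, x₁ - x₂⟫| ≤ η i * |f i x₁ - f i x₂|)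
    (xs : EuclideanSpace ℝ (Fin n)) (hxs : ∀ i, f i xs = 0)
    (x : EuclideanSpace ℝ (Fin n)) (i : Fin m) (hgi : g i x ≠ 0) :
    ‖(x - (f i x / ‖g i x‖ ^ 2) • g i x) - xs‖ ^ 2
      ≤ ‖x - xs‖ ^ 2 - (1 - 2 * η i) * ((f i x) ^ 2 / ‖g i x‖ ^ 2) := by
  have h := htcc i x xs
  rw [hxs i, sub_zero] at h
  have hG : 0 < ‖g i x‖ ^ 2 := by
    have := norm_pos_iff.mpr hgi
    positivity
  have e : (x - (f i x / ‖g i x‖ ^ 2) • g i x) - xs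
      = (x - xs) - (f i x / ‖g i x‖ ^ 2) • g i x := by abel
  rw [e, norm_sub_sq_real, inner_smul_right, norm_smul, mul_pow, Real.norm_eq_abs, sq_abs,
    real_inner_comm]
  generalize ⟪g i x, x - xs⟫ = p at *
  generalize ‖g i x‖ ^ 2 = G at *
  generalize f i x = F at *
  have h1 : F * (F - p) ≤ η i * F ^ 2 := by
    calc F * (F - p) ≤ |F * (F - p)| := le_abs_self _
      _ = |F| * |F - p| := abs_mul _ _
      _ ≤ |F| * (η i * |F|) := mul_le_mul_of_nonneg_left h (abs_nonneg _)
      _ = η i * F ^ 2 := by rw [← sq_abs F]; ring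
  have h2 : F * (F - p) / G ≤ η i * F ^ 2 / G := div_le_div_of_nonneg_right h1 hG.le
  have h3 : (F / G) ^ 2 * G = F ^ 2 / G := by field_simp
  rw [h3]
  have h4 : F * (F - p) / G = F ^ 2 / G - F / G * p := by ring
  have h5 : η i * F ^ 2 / G = η i * (F ^ 2 / G) := by ring
  rw [h4, h5] at h2
  linarith
end

section
/- Suppose f satisfies the local tangential cone condition with constants η_1, …, η_m ∈ [0, 1/2), η := max_i η_i, and x⋆ ∈ ℝⁿ satisfies f(x⋆) = 0. Let x ∈ ℝⁿ, let τ ⊆ {1,…,m} be a nonempty index set, let A = f'_τ(x), and let B be the Moore–Penrose pseudoinverse of A. Let h, σ ≥ 0 be real numbers such that h·‖v‖ ≤ ‖Bv‖ ≤ σ·‖v‖ for every v ∈ ℝ^τ. Then ‖(x − B·f_τ(x)) − x⋆‖² ≤ ‖x − x⋆‖² − (h² − 2·η·σ²)·‖f_τ(x)‖². -/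
open scoped RealInnerProductSpace
open Finset Matrix

/-- one-step estimate for the block nonlinear Kaczmarz update
using the Moore–Penrose pseudoinverse of the restricted Jacobian. -/
theorem stmt2 {n m : ℕ} (hn : 0 < n) (hm : 0 < m)
    (f : Fin m → EuclideanSpace ℝ (Fin n) → ℝ)
    (g : Fin m → EuclideanSpace ℝ (Fin n) → EuclideanSpace ℝ (Fin n))
    (hgrad : ∀ i y, HasGradientAt (f i) (g i y) y)
    (η : Fin m → ℝ) (hη0 : ∀ i, 0 ≤ η i) (hη1 : ∀ i, η i < 1 / 2)
    (htcc : ∀ i x₁ x₂, |f i x₁ - f i x₂ - ⟪g i x₁, x₁ - x₂⟫| ≤ η i * |f i x₁ - f i x₂|)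
    (ηm : ℝ) (hηm : ηm = ⨆ i, η i)
    (xs : EuclideanSpace ℝ (Fin n)) (hxs : ∀ i, f i xs = 0)
    (x : EuclideanSpace ℝ (Fin n))
    (τ : Finset (Fin m)) (hτ : τ.Nonempty)
    (A : Matrix ↥τ (Fin n) ℝ) (hA : ∀ (i : ↥τ) (j : Fin n), A i j = g i x j)
    (B : Matrix (Fin n) ↥τ ℝ)
    (hB1 : A * B * A = A) (hB2 : B * A * B = B)
    (hB3 : (A * B)ᵀ = A * B) (hB4 : (B * A)ᵀ = B * A)
    (h σ : ℝ) (hh : 0 ≤ h) (hσ : 0 ≤ σ)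
    (hlow : ∀ v : ↥τ → ℝ, h * Real.sqrt (∑ i, v i ^ 2)
      ≤ ‖(EuclideanSpace.equiv (Fin n) ℝ).symm (B.mulVec v)‖)
    (hup : ∀ v : ↥τ → ℝ, ‖(EuclideanSpace.equiv (Fin n) ℝ).symm (B.mulVec v)‖
      ≤ σ * Real.sqrt (∑ i, v i ^ 2)) :
    ‖(x - (EuclideanSpace.equiv (Fin n) ℝ).symm (B.mulVec fun i : ↥τ => f i x)) - xs‖ ^ 2
      ≤ ‖x - xs‖ ^ 2 - (h ^ 2 - 2 * ηm * σ ^ 2) * ∑ i ∈ τ, (f i x) ^ 2 := by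
  have hηle : ∀ i, η i ≤ ηm := fun i => by
    rw [hηm]; exact le_ciSup (Set.finite_range η).bddAbove i
  have hη : 0 ≤ ηm := (hη0 ⟨0, hm⟩).trans (hηle _)
  set F : ↥τ → ℝ := fun i => f i x with hF
  set e : EuclideanSpace ℝ (Fin n) := x - xs with he
  set P : (↥τ → ℝ) → EuclideanSpace ℝ (Fin n) :=
    fun v => (EuclideanSpace.equiv (Fin n) ℝ).symm (B.mulVec v) with hP
  set w : ↥τ → ℝ := A.mulVec (fun j => e j) with hw
  have hwi : ∀ i : ↥τ, w i = ⟪g i x, e⟫ := by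
    intro i
    simp [hw, Matrix.mulVec, dotProduct, PiLp.inner_apply, hA, mul_comm]
  have hinner : ∀ (y : EuclideanSpace ℝ (Fin n)) v, ⟪y, P v⟫ = (fun j => y j) ⬝ᵥ B.mulVec v := by
    intro y v
    simp [hP, dotProduct, PiLp.inner_apply, mul_comm]
  have key : ⟪e, P F⟫ = ⟪P w, P F⟫ := by
    rw [hinner, hinner]
    change _ = B.mulVec w ⬝ᵥ B.mulVec F
    rw [hw, Matrix.mulVec_mulVec, ← hB4, Matrix.mulVec_transpose, ← Matrix.dotProduct_mulVec,
      Matrix.mulVec_mulVec, hB2]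
  have hsub : P w = P F - P (F - w) := by
    simp [hP, Matrix.mulVec_sub]
  have hS : ∑ i ∈ τ, (f i x) ^ 2 = ∑ i, F i ^ 2 := by
    rw [← Finset.sum_coe_sort τ]
  rw [hS]
  set S := ∑ i, F i ^ 2 with hSd
  have hS0 : 0 ≤ S := Finset.sum_nonneg fun i _ => sq_nonneg _
  have hr : Real.sqrt (∑ i, (F - w) i ^ 2) ≤ ηm * Real.sqrt S := by
    rw [Real.sqrt_le_left (by positivity), mul_pow, Real.sq_sqrt hS0, hSd, Finset.mul_sum]
    refine Finset.sum_le_sum fun i _ => ?_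
    rw [← mul_pow, sq_le_sq, abs_mul, abs_of_nonneg hη]
    have := htcc i x xs
    rw [hxs, sub_zero] at this
    rw [Pi.sub_apply, hwi]
    exact this.trans (mul_le_mul_of_nonneg_right (hηle _) (abs_nonneg _))
  have h1 : ‖P (F - w)‖ ≤ σ * (ηm * Real.sqrt S) :=
    (hup _).trans (mul_le_mul_of_nonneg_left hr hσ)
  have h2 : ‖P F‖ ≤ σ * Real.sqrt S := hup F
  have h3 : ⟪P (F - w), P F⟫ ≤ ηm * σ ^ 2 * S := by
    calc _ ≤ ‖P (F - w)‖ * ‖P F‖ := real_inner_le_norm _ _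
      _ ≤ (σ * (ηm * Real.sqrt S)) * (σ * Real.sqrt S) := by gcongr
      _ = ηm * σ ^ 2 * (Real.sqrt S) ^ 2 := by ring
      _ = _ := by rw [Real.sq_sqrt hS0]
  have h4 : h ^ 2 * S ≤ ‖P F‖ ^ 2 := by
    have : (h * Real.sqrt S) ^ 2 ≤ ‖P F‖ ^ 2 := by
      have := hlow F
      gcongr
    rwa [mul_pow, Real.sq_sqrt hS0] at this
  have h5 : x - P F - xs = e - P F := by rw [he]; abel
  change ‖x - P F - xs‖ ^ 2 ≤ _
  rw [h5, norm_sub_sq_real, key, hsub, inner_sub_left, real_inner_self_eq_norm_sq]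
  linarith
end

section
/- Let x ∈ ℝⁿ satisfy f(x) ≠ 0 and ∇f_i(x) ≠ 0 for all i, and write U = U(x). Then Σ_{i∈U} ( |f_i(x)|² / Σ_{j∈U} |f_j(x)|² ) · ( |f_i(x)|²/‖∇f_i(x)‖² ) ≥ ε(x)·‖f(x)‖². -/
open Finset

/-- The capped threshold `ε(x)` of the DR-CNK method. -/
noncomputable def eps {n m : ℕ} (f : Fin m → EuclideanSpace ℝ (Fin n) → ℝ)
    (g : Fin m → EuclideanSpace ℝ (Fin n) → EuclideanSpace ℝ (Fin n))
    (x : EuclideanSpace ℝ (Fin n)) : ℝ :=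
  (1 / 2) * ((1 / ∑ j, (f j x) ^ 2) * (⨆ i, (f i x) ^ 2 / ‖g i x‖ ^ 2)
    + 1 / ∑ j, ‖g j x‖ ^ 2)

open Classical in
/-- The index set `U(x)` of the DR-CNK method. -/
noncomputable def Uset {n m : ℕ} (f : Fin m → EuclideanSpace ℝ (Fin n) → ℝ)
    (g : Fin m → EuclideanSpace ℝ (Fin n) → EuclideanSpace ℝ (Fin n))
    (x : EuclideanSpace ℝ (Fin n)) : Finset (Fin m) :=
  Finset.univ.filter fun i => (f i x) ^ 2 ≥ eps f g x * (∑ j, (f j x) ^ 2) * ‖g i x‖ ^ 2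

/-- the expected weighted distance decrease of the DR-CNK
sampling is at least `ε(x)·‖f(x)‖²`. -/
theorem stmt6 {n m : ℕ} (hn : 0 < n) (hm : 0 < m)
    (f : Fin m → EuclideanSpace ℝ (Fin n) → ℝ)
    (g : Fin m → EuclideanSpace ℝ (Fin n) → EuclideanSpace ℝ (Fin n))
    (hgrad : ∀ i y, HasGradientAt (f i) (g i y) y)
    (x : EuclideanSpace ℝ (Fin n)) (hfx : (fun i => f i x) ≠ 0)
    (hg : ∀ i, g i x ≠ 0) :
    ∑ i ∈ Uset f g x,
        ((f i x) ^ 2 / ∑ j ∈ Uset f g x, (f j x) ^ 2) * ((f i x) ^ 2 / ‖g i x‖ ^ 2)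
      ≥ eps f g x * ∑ j, (f j x) ^ 2 := by
  have hgp : ∀ i, 0 < ‖g i x‖ ^ 2 := fun i => by
    have := norm_pos_iff.mpr (hg i)
    positivity
  haveI : Nonempty (Fin m) := ⟨⟨0, hm⟩⟩
  obtain ⟨k, hk⟩ : ∃ k, f k x ≠ 0 := by
    by_contra! h
    exact hfx (funext h)
  have hkp : 0 < (f k x) ^ 2 := by positivity
  have hF : 0 < ∑ j, (f j x) ^ 2 :=
    Finset.sum_pos' (fun i _ => sq_nonneg _) ⟨k, Finset.mem_univ _, hkp⟩
  have hG : 0 < ∑ j, ‖g j x‖ ^ 2 :=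
    Finset.sum_pos (fun i _ => hgp i) Finset.univ_nonempty
  obtain ⟨p, hp⟩ := exists_eq_ciSup_of_finite (f := fun i => (f i x) ^ 2 / ‖g i x‖ ^ 2)
  have hle : ∀ i, (f i x) ^ 2 / ‖g i x‖ ^ 2 ≤ (f p x) ^ 2 / ‖g p x‖ ^ 2 := fun i => by
    have h := le_ciSup (f := fun i => (f i x) ^ 2 / ‖g i x‖ ^ 2)
      (Set.finite_range _).bddAbove i
    rw [← hp] at h
    exact h
  have hE : eps f g x * ∑ j, (f j x) ^ 2
      = ((f p x) ^ 2 / ‖g p x‖ ^ 2 + (∑ j, (f j x) ^ 2) / ∑ j, ‖g j x‖ ^ 2) / 2 := by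
    unfold eps
    rw [← hp]
    have := (hgp p).ne'
    field_simp
  have hFG : (∑ j, (f j x) ^ 2) / ∑ j, ‖g j x‖ ^ 2 ≤ (f p x) ^ 2 / ‖g p x‖ ^ 2 := by
    rw [div_le_iff₀ hG, Finset.mul_sum]
    exact Finset.sum_le_sum fun i _ => (div_le_iff₀ (hgp i)).mp (hle i)
  have hEM : eps f g x * ∑ j, (f j x) ^ 2 ≤ (f p x) ^ 2 / ‖g p x‖ ^ 2 := by
    rw [hE]; linarith
  have hpU : p ∈ Uset f g x := by
    simp only [Uset, Finset.mem_filter, Finset.mem_univ, true_and, ge_iff_le]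
    exact (le_div_iff₀ (hgp p)).mp hEM
  have hpp : 0 < (f p x) ^ 2 := by
    have h1 := lt_of_lt_of_le (div_pos hkp (hgp k)) (hle k)
    have h2 := mul_pos h1 (hgp p)
    rwa [div_mul_cancel₀ _ (hgp p).ne'] at h2
  have hS : 0 < ∑ j ∈ Uset f g x, (f j x) ^ 2 :=
    Finset.sum_pos' (fun i _ => sq_nonneg _) ⟨p, hpU, hpp⟩
  calc eps f g x * ∑ j, (f j x) ^ 2
      = ∑ i ∈ Uset f g x, ((f i x) ^ 2 / ∑ j ∈ Uset f g x, (f j x) ^ 2) *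
          (eps f g x * ∑ j, (f j x) ^ 2) := by
        rw [← Finset.sum_mul, ← Finset.sum_div, div_self hS.ne', one_mul]
    _ ≤ _ := by
        refine Finset.sum_le_sum fun i hi => ?_
        refine mul_le_mul_of_nonneg_left ?_ (div_nonneg (sq_nonneg _) hS.le)
        simp only [Uset, Finset.mem_filter, Finset.mem_univ, true_and, ge_iff_le] at hi
        exact (le_div_iff₀ (hgp i)).mpr hi
end

section
/- (Comparison of the DR-CNK and NRK convergence factors.) Let x ∈ ℝⁿ satisfy f(x) ≠ 0 and ∇f_i(x) ≠ 0 for all i, let 0 < η < 1/2, and let h > 0 be a real number. Then ((1 − 2η)/(1 + η²))·ε(x)·h² > ((1 − 2η)/(1 + η)²)·h²/( m·Σ_{j=1}^m ‖∇f_j(x)‖² ); equivalently, 1 − ((1 − 2η)/(1 + η²))·ε(x)·h² < 1 − ((1 − 2η)/(1 + η)²)·h²/( m·Σ_{j=1}^m ‖∇f_j(x)‖² ). -/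
open Finset

/-- comparison of the DR-CNK and NRK convergence factors. -/
theorem stmt10 {n m : ℕ} (hn : 0 < n) (hm : 0 < m)
    (f : Fin m → EuclideanSpace ℝ (Fin n) → ℝ)
    (g : Fin m → EuclideanSpace ℝ (Fin n) → EuclideanSpace ℝ (Fin n))
    (hgrad : ∀ i y, HasGradientAt (f i) (g i y) y)
    (x : EuclideanSpace ℝ (Fin n)) (hfx : (fun i => f i x) ≠ 0)
    (hg : ∀ i, g i x ≠ 0)
    (η : ℝ) (hη0 : 0 < η) (hη1 : η < 1 / 2)
    (h : ℝ) (hh : 0 < h) :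
    ((1 - 2 * η) / (1 + η ^ 2)) * eps f g x * h ^ 2
        > ((1 - 2 * η) / (1 + η) ^ 2) * h ^ 2 / ((m : ℝ) * ∑ j, ‖g j x‖ ^ 2)
    ∧ 1 - ((1 - 2 * η) / (1 + η ^ 2)) * eps f g x * h ^ 2
        < 1 - ((1 - 2 * η) / (1 + η) ^ 2) * h ^ 2 / ((m : ℝ) * ∑ j, ‖g j x‖ ^ 2) := by
  have hmR : (1 : ℝ) ≤ m := by exact_mod_cast hm
  have hgi : ∀ i, 0 < ‖g i x‖ ^ 2 := fun i => by
    have := norm_pos_iff.mpr (hg i)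
    positivity
  have hG : 0 < ∑ j, ‖g j x‖ ^ 2 :=
    Finset.sum_pos (fun i _ => hgi i) ⟨⟨0, hm⟩, Finset.mem_univ _⟩
  have hF : 0 < ∑ j, (f j x) ^ 2 := by
    obtain ⟨i, hi⟩ := Function.ne_iff.mp hfx
    have hi' : f i x ≠ 0 := hi
    exact Finset.sum_pos' (fun j _ => sq_nonneg _) ⟨i, Finset.mem_univ _, by positivity⟩
  have hM : ∑ j, (f j x) ^ 2 ≤ (⨆ i, (f i x) ^ 2 / ‖g i x‖ ^ 2) * ∑ j, ‖g j x‖ ^ 2 := by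
    rw [Finset.mul_sum]
    refine Finset.sum_le_sum fun j _ => ?_
    rw [← div_le_iff₀ (hgi j)]
    exact le_ciSup (f := fun i => (f i x) ^ 2 / ‖g i x‖ ^ 2) (Set.finite_range _).bddAbove j
  have heps : 1 / ∑ j, ‖g j x‖ ^ 2 ≤ eps f g x := by
    unfold eps
    generalize (⨆ i, (f i x) ^ 2 / ‖g i x‖ ^ 2) = M at *
    have h1 : 1 / ∑ j, ‖g j x‖ ^ 2 ≤ (1 / ∑ j, (f j x) ^ 2) * M := by
      rw [one_div_mul_eq_div, div_le_div_iff₀ hG hF]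
      linarith
    linarith
  have key : ((1 - 2 * η) / (1 + η ^ 2)) * eps f g x * h ^ 2
        > ((1 - 2 * η) / (1 + η) ^ 2) * h ^ 2 / ((m : ℝ) * ∑ j, ‖g j x‖ ^ 2) := by
    generalize eps f g x = e at *
    generalize (∑ j, ‖g j x‖ ^ 2) = G at *
    have h0 : 0 < 1 - 2 * η := by linarith
    have h1 : (1 - 2 * η) / (1 + η) ^ 2 < (1 - 2 * η) / (1 + η ^ 2) :=
      div_lt_div_of_pos_left h0 (by positivity) (by nlinarith)
    have h2 : 1 / (m * G) ≤ 1 / G :=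
      one_div_le_one_div_of_le hG (by nlinarith)
    have h3 : 0 < 1 / G := by positivity
    calc ((1 - 2 * η) / (1 + η) ^ 2) * h ^ 2 / (m * G)
        = ((1 - 2 * η) / (1 + η) ^ 2) * (1 / (m * G)) * h ^ 2 := by ring
      _ ≤ ((1 - 2 * η) / (1 + η) ^ 2) * (1 / G) * h ^ 2 := by gcongr
      _ < ((1 - 2 * η) / (1 + η ^ 2)) * (1 / G) * h ^ 2 := by gcongr
      _ ≤ ((1 - 2 * η) / (1 + η ^ 2)) * e * h ^ 2 := by gcongr
  exact ⟨key, by linarith⟩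
end

section
/- (Comparison of the RD-CNK and NRK convergence factors.) Let x ∈ ℝⁿ satisfy f(x) ≠ 0 and ∇f_i(x) ≠ 0 for all i, let 0 < η < 1/2, and let h > 0 be a real number. Then ((1 − 2η)/(1 + η²))·δ(x)·h² / max_{i∈{1,…,m}} ‖∇f_i(x)‖² > ((1 − 2η)/(1 + η)²)·h²/( m·Σ_{j=1}^m ‖∇f_j(x)‖² ). -/
open Finset

/-- The capped threshold `δ(x)` of the RD-CNK method. -/
noncomputable def dlt {n m : ℕ} (f : Fin m → EuclideanSpace ℝ (Fin n) → ℝ)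
    (x : EuclideanSpace ℝ (Fin n)) : ℝ :=
  (1 / 2) * ((⨆ i, (f i x) ^ 2) / (∑ j, (f j x) ^ 2) + 1 / (m : ℝ))

open Classical in
/-- The index set `I(x)` of the RD-CNK method. -/
noncomputable def Iset {n m : ℕ} (f : Fin m → EuclideanSpace ℝ (Fin n) → ℝ)
    (x : EuclideanSpace ℝ (Fin n)) : Finset (Fin m) :=
  Finset.univ.filter fun i => (f i x) ^ 2 ≥ dlt f x * ∑ j, (f j x) ^ 2

/-- comparison of the RD-CNK and NRK convergence factors. -/
theorem stmt11 {n m : ℕ} (hn : 0 < n) (hm : 0 < m)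
    (f : Fin m → EuclideanSpace ℝ (Fin n) → ℝ)
    (g : Fin m → EuclideanSpace ℝ (Fin n) → EuclideanSpace ℝ (Fin n))
    (hgrad : ∀ i y, HasGradientAt (f i) (g i y) y)
    (x : EuclideanSpace ℝ (Fin n)) (hfx : (fun i => f i x) ≠ 0)
    (hg : ∀ i, g i x ≠ 0)
    (η : ℝ) (hη0 : 0 < η) (hη1 : η < 1 / 2)
    (h : ℝ) (hh : 0 < h) :
    ((1 - 2 * η) / (1 + η ^ 2)) * dlt f x * h ^ 2 / (⨆ i, ‖g i x‖ ^ 2)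
      > ((1 - 2 * η) / (1 + η) ^ 2) * h ^ 2 / ((m : ℝ) * ∑ j, ‖g j x‖ ^ 2) := by
  have hm' : (0 : ℝ) < m := by exact_mod_cast hm
  haveI : Nonempty (Fin m) := ⟨⟨0, hm⟩⟩
  have bddF : BddAbove (Set.range fun i => (f i x) ^ 2) := Set.finite_range _ |>.bddAbove
  have bddG : BddAbove (Set.range fun i => ‖g i x‖ ^ 2) := Set.finite_range _ |>.bddAbove
  obtain ⟨i0, hi0⟩ : ∃ i, f i x ≠ 0 := by
    by_contra hcon
    push Not at hcon
    exact hfx (funext hcon)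
  have hS : 0 < ∑ j, (f j x) ^ 2 :=
    Finset.sum_pos' (fun i _ => sq_nonneg _) ⟨i0, Finset.mem_univ _, by positivity⟩
  have hSle : ∑ j, (f j x) ^ 2 ≤ (m : ℝ) * ⨆ i, (f i x) ^ 2 := by
    have := Finset.sum_le_card_nsmul Finset.univ (fun j => (f j x) ^ 2) (⨆ i, (f i x) ^ 2)
      (fun i _ => le_ciSup bddF i)
    simpa using this
  have hd : 1 / (m : ℝ) ≤ dlt f x := by
    have : 1 / (m : ℝ) ≤ (⨆ i, (f i x) ^ 2) / (∑ j, (f j x) ^ 2) := by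
      rw [div_le_div_iff₀ hm' hS]
      linarith
    unfold dlt
    linarith
  have hGpos : 0 < ⨆ i, ‖g i x‖ ^ 2 := by
    have h1 : 0 < ‖g i0 x‖ ^ 2 := pow_pos (norm_pos_iff.mpr (hg i0)) 2
    exact lt_of_lt_of_le h1 (le_ciSup bddG i0)
  have hGle : (⨆ i, ‖g i x‖ ^ 2) ≤ ∑ j, ‖g j x‖ ^ 2 :=
    ciSup_le fun i => Finset.single_le_sum (f := fun j => ‖g j x‖ ^ 2)
      (fun j _ => sq_nonneg _) (Finset.mem_univ i)
  have hη : 0 < 1 - 2 * η := by linarith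
  generalize (⨆ i, ‖g i x‖ ^ 2) = M at *
  generalize (∑ j, ‖g j x‖ ^ 2) = T at *
  have hT : 0 < T := lt_of_lt_of_le hGpos hGle
  calc ((1 - 2 * η) / (1 + η) ^ 2) * h ^ 2 / ((m : ℝ) * T)
      < ((1 - 2 * η) / (1 + η ^ 2)) * h ^ 2 / ((m : ℝ) * T) := by
        have : 1 + η ^ 2 < (1 + η) ^ 2 := by nlinarith
        gcongr
    _ ≤ ((1 - 2 * η) / (1 + η ^ 2)) * h ^ 2 / ((m : ℝ) * M) := by gcongr
    _ = ((1 - 2 * η) / (1 + η ^ 2)) * (1 / (m : ℝ)) * h ^ 2 / M := by field_simp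
    _ ≤ ((1 - 2 * η) / (1 + η ^ 2)) * dlt f x * h ^ 2 / M := by gcongr
end
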